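/- arXiv:1204.4992 — 4 statements merged into one kernel-verified Lean document; each statement's English description precedes it below -/
import Mathlib

section
/- Let (W,S) be a finite Coxeter system, J, K ⊆ S, and w ∈ W. Then the intersection of the double coset W_J·w·W_K with W^K contains a unique minimal element w_min and a unique maximal element w_max with respect to the Bruhat order. -/
/-- The Bruhat order on a Coxeter group: `u ≤ v` iff some reduced word for `v`
contains a subword that is a reduced word for `u`. -/
def CoxeterSystem.bruhatLE {B W : Type*} [Group W] {M : CoxeterMatrix B}
    (cs : CoxeterSystem M W) (u v : W) : Prop :=
  ∃ l : List B, cs.IsReduced l ∧ cs.wordProd l = v ∧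
    ∃ l' : List B, l'.Sublist l ∧ cs.IsReduced l' ∧ cs.wordProd l' = u

/-- The standard parabolic subgroup `W_J` generated by the simple reflections
indexed by `J`. -/
def CoxeterSystem.parabolic {B W : Type*} [Group W] {M : CoxeterMatrix B}
    (cs : CoxeterSystem M W) (J : Set B) : Subgroup W :=
  Subgroup.closure (cs.simple '' J)

/-- `W^K` : the set of elements of minimal length in their coset `w · W_K`. -/
def CoxeterSystem.minLengthReps {B W : Type*} [Group W] {M : CoxeterMatrix B}
    (cs : CoxeterSystem M W) (K : Set B) : Set W :=
  {w | ∀ u ∈ cs.parabolic K, cs.length w ≤ cs.length (w * u)}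

/-- The double coset `W_J · w · W_K`. -/
def CoxeterSystem.doubleCoset {B W : Type*} [Group W] {M : CoxeterMatrix B}
    (cs : CoxeterSystem M W) (J K : Set B) (w : W) : Set W :=
  {x | ∃ p ∈ cs.parabolic J, ∃ q ∈ cs.parabolic K, x = p * w * q}

/-!
The Bruhat order is the reachability relation of the Bruhat graph, whose arrows `u → u * t` multiply
by a reflection and increase the length; by the strong exchange condition this does not depend on
the choice of a reduced word. Hence `u ≤ v` implies that `s * u` lies below `v` or `s * v`, and, if
moreover `u < s * u`, that `u ≤ s * v`.

An element `d` of minimal length in a double coset has no left descents in `J` and no right descents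
in `K`, so the set of elements above `d` is stable under left multiplication by `W_J` and right
multiplication by `W_K`: it contains the whole double coset. Dually, if `z` has maximal length in
`W_J w W_K ∩ W^K`, then for `s ∈ J` either `s * z < z` or `s * z ∈ z W_K`. So the set of elements
below some element of `z W_K` is stable under the same multiplications, and an element of `W^K`
below an element of `z W_K` is already below `z`.
-/

namespace BruhatOrder

open CoxeterSystem Relation

variable {B W : Type*} [Group W] {M : CoxeterMatrix B} {cs : CoxeterSystem M W}

local notation "s" => cs.simple
local notation "π" => cs.wordProd
local notation "ℓ" => cs.length

/-! ### The strong exchange condition -/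

section StrongExchange

open scoped Classical in
variable (cs) in
/-- The action of a simple reflection on signed group elements: conjugate by `s i`, and change the
sign (written additively in `ZMod 2`) of `s i` itself. On reflections this is the action on roots,
the reflection `t` with its sign standing for one of the two roots attached to `t`. -/
noncomputable def signedConj (i : B) : Function.End (W × ZMod 2) :=
  fun p ↦ (s i * p.1 * (s i)⁻¹, p.2 + if p.1 = s i then 1 else 0)

open scoped Classical in
theorem prod_map_signedConj_apply (ω : List B) (p : W × ZMod 2) :
    (ω.map (signedConj cs)).prod p =
      (π ω * p.1 * (π ω)⁻¹, p.2 + ((cs.rightInvSeq ω).count p.1 : ZMod 2)) := by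
  induction ω with
  | nil => simp [Function.End.one_def]
  | cons i ω ih =>
    have conj_eq_simple_iff : π ω * p.1 * (π ω)⁻¹ = s i ↔ (π ω)⁻¹ * s i * π ω = p.1 := by
      rw [mul_inv_eq_iff_eq_mul, mul_assoc, inv_mul_eq_iff_eq_mul, eq_comm]
    rw [List.map_cons, List.prod_cons]
    change signedConj cs i ((ω.map (signedConj cs)).prod p) = _
    rw [ih]
    ext
    · simp [signedConj, cs.wordProd_cons, mul_assoc]
    · simp [signedConj, rightInvSeq, List.count_cons, conj_eq_simple_iff, add_assoc]

theorem prod_map_alternatingWord_two_mul {G : Type*} [Monoid G] (f : B → G) (i j : B) (m : ℕ) :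
    ((alternatingWord i j (2 * m)).map f).prod = (f i * f j) ^ m := by
  induction m with
  | zero => simp [alternatingWord]
  | succ m ih =>
    rw [Nat.mul_succ, alternatingWord_succ, alternatingWord_succ, pow_succ, ← ih]
    simp

theorem reverse_alternatingWord_two_mul (i j : B) (m : ℕ) :
    (alternatingWord i j (2 * m)).reverse = alternatingWord j i (2 * m) := by
  induction m with
  | zero => simp [alternatingWord]
  | succ m ih =>
    rw [Nat.mul_succ, alternatingWord_succ, alternatingWord_succ, alternatingWord_succ',
      alternatingWord_succ']
    simp [ih]

variable (cs) in
theorem exists_leftInvSeq_alternatingWord_eq_append_self (i j : B) :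
    ∃ L, cs.leftInvSeq (alternatingWord i j (2 * M i j)) = L ++ L := by
  set L := cs.leftInvSeq (alternatingWord i j (2 * M i j)) with hL
  have length_L : L.length = 2 * M i j := by
    rw [hL, length_leftInvSeq, length_alternatingWord]
  suffices L.drop (M i j) = L.take (M i j) from
    ⟨L.take (M i j), (L.take_append_drop (M i j)).symm.trans (by rw [this])⟩
  refine List.ext_getElem (by simp; omega) fun k _ hk ↦ ?_
  have hk : k < M i j := (List.length_take ▸ hk).trans_le (min_le_left _ _)
  rw [List.getElem_drop, List.getElem_take, getElem_leftInvSeq_alternatingWord _ _ _ _ _ (by omega),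
    getElem_leftInvSeq_alternatingWord _ _ _ _ _ (by omega), prod_alternatingWord_eq_mul_pow,
    prod_alternatingWord_eq_mul_pow, show (2 * (M i j + k) + 1) / 2 = M i j + k by omega,
    show (2 * k + 1) / 2 = k by omega, pow_add, simple_mul_simple_pow']
  simp

open scoped Classical in
variable (cs) in
theorem count_rightInvSeq_alternatingWord (i j : B) (t : W) :
    ((cs.rightInvSeq (alternatingWord i j (2 * M i j))).count t : ZMod 2) = 0 := by
  obtain ⟨L, hL⟩ := exists_leftInvSeq_alternatingWord_eq_append_self cs j i
  rw [← reverse_alternatingWord_two_mul, rightInvSeq_reverse, List.count_reverse, M.symmetric, hL,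
    List.count_append, Nat.cast_add, CharTwo.add_self_eq_zero]

variable (cs) in
theorem isLiftable_signedConj : M.IsLiftable (signedConj cs) := by
  classical
  intro i j
  have wordProd_eq_one : π (alternatingWord i j (2 * M i j)) = 1 := by
    rw [wordProd, prod_map_alternatingWord_two_mul, simple_mul_simple_pow]
  rw [← prod_map_alternatingWord_two_mul]
  funext p
  rw [prod_map_signedConj_apply, wordProd_eq_one, count_rightInvSeq_alternatingWord]
  simp [Function.End.one_def]

variable (cs) in
/-- The action of `W` on signed group elements extending `signedConj`. -/
noncomputable def signedConjHom : W →* Function.End (W × ZMod 2) :=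
  cs.lift ⟨signedConj cs, isLiftable_signedConj cs⟩

open scoped Classical in
theorem signedConjHom_wordProd_apply (ω : List B) (p : W × ZMod 2) :
    signedConjHom cs (π ω) p =
      (π ω * p.1 * (π ω)⁻¹, p.2 + ((cs.rightInvSeq ω).count p.1 : ZMod 2)) := by
  have signedConjHom_comp_simple : signedConjHom cs ∘ s = signedConj cs :=
    funext (cs.lift_apply_simple (isLiftable_signedConj cs))
  rw [← prod_map_signedConj_apply, wordProd, map_list_prod, List.map_map,
    signedConjHom_comp_simple]

variable (cs) in
/-- The parity of the number of occurrences of `t` in the right inversion sequence of a word for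
`w`; defined through the action `signedConjHom`, it does not depend on the word. -/
noncomputable def inversionParity (w t : W) : ZMod 2 :=
  (signedConjHom cs w (t, 0)).2

open scoped Classical in
theorem inversionParity_wordProd (ω : List B) (t : W) :
    inversionParity cs (π ω) t = (cs.rightInvSeq ω).count t := by
  rw [inversionParity, signedConjHom_wordProd_apply, zero_add]

theorem inversionParity_mul (v w t : W) :
    inversionParity cs (v * w) t =
      inversionParity cs w t + inversionParity cs v (w * t * w⁻¹) := by
  classical
  obtain ⟨α, rfl⟩ := cs.wordProd_surjective v
  obtain ⟨β, rfl⟩ := cs.wordProd_surjective w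
  rw [inversionParity, map_mul]
  change (signedConjHom cs (π α) (signedConjHom cs (π β) (t, 0))).2 = _
  simp only [signedConjHom_wordProd_apply, inversionParity_wordProd, zero_add]

theorem inversionParity_one (t : W) : inversionParity cs 1 t = 0 := by
  classical
  simpa using inversionParity_wordProd (cs := cs) [] t

theorem inversionParity_simple_self (i : B) : inversionParity cs (s i) (s i) = 1 := by
  classical
  simpa using inversionParity_wordProd (cs := cs) [i] (s i)

theorem inversionParity_self {t : W} (ht : cs.IsReflection t) : inversionParity cs t t = 1 := by
  obtain ⟨u, i, rfl⟩ := ht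
  have cancel := inversionParity_mul (cs := cs) u u⁻¹ (u * s i * u⁻¹)
  have split := inversionParity_mul (cs := cs) (u * s i) u⁻¹ (u * s i * u⁻¹)
  have conj_eq : u⁻¹ * (u * s i * u⁻¹) * u⁻¹⁻¹ = s i := by group
  rw [mul_inv_cancel, inversionParity_one, conj_eq] at cancel
  rw [conj_eq, inversionParity_mul u, inversionParity_simple_self, mul_inv_cancel_right,
    add_left_comm, ← cancel, add_zero] at split
  exact split

theorem mem_rightInvSeq_of_isRightInversion {ω : List B} {t : W}
    (h : cs.IsRightInversion (π ω) t) : t ∈ cs.rightInvSeq ω := by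
  classical
  by_contra t_notMem
  obtain ⟨ω', ω'_reduced, hω'⟩ := cs.exists_isReduced (π ω * t)
  have parity_eq_one : inversionParity cs (π ω * t) t = 1 := by
    rw [inversionParity_mul, inversionParity_self h.1, mul_inv_cancel_right,
      inversionParity_wordProd, List.count_eq_zero_of_not_mem t_notMem, Nat.cast_zero, add_zero]
  have t_mem : t ∈ cs.rightInvSeq ω' := by
    by_contra t_notMem'
    rw [hω', inversionParity_wordProd, List.count_eq_zero_of_not_mem t_notMem'] at parity_eq_one
    exact zero_ne_one parity_eq_one
  have length_lt := (cs.isRightInversion_of_mem_rightInvSeq ω'_reduced t_mem).2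
  rw [← hω', mul_assoc, h.1.mul_self, mul_one] at length_lt
  exact lt_asymm length_lt h.2

theorem exists_wordProd_eraseIdx_eq_of_isRightInversion {ω : List B} {t : W}
    (h : cs.IsRightInversion (π ω) t) : ∃ k < ω.length, π (ω.eraseIdx k) = π ω * t := by
  obtain ⟨k, hk, rfl⟩ := List.mem_iff_getElem.mp (mem_rightInvSeq_of_isRightInversion h)
  refine ⟨k, by simpa using hk, ?_⟩
  rw [← List.getD_eq_getElem _ 1 hk, wordProd_mul_getD_rightInvSeq]

variable (cs) in
theorem exists_isReduced_sublist (ω : List B) :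
    ∃ ω' : List B, ω'.Sublist ω ∧ cs.IsReduced ω' ∧ π ω' = π ω := by
  induction ω using List.reverseRecOn with
  | nil => exact ⟨[], List.Sublist.refl _, by simp [CoxeterSystem.IsReduced], rfl⟩
  | append_singleton ω i ih =>
    obtain ⟨ω', ω'_sublist, ω'_reduced, hω'⟩ := ih
    rcases cs.length_mul_simple (π ω') i with length_eq | length_eq
    · refine ⟨ω' ++ [i], ω'_sublist.append_right [i], ?_, by simp [wordProd_append, hω']⟩
      simp [CoxeterSystem.IsReduced, wordProd_append, length_eq, ω'_reduced.eq]
    · obtain ⟨k, hk, hω'k⟩ := exists_wordProd_eraseIdx_eq_of_isRightInversion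
        (⟨cs.isReflection_simple i, by omega⟩ : cs.IsRightInversion (π ω') (s i))
      refine ⟨ω'.eraseIdx k, ?_, ?_, by simp [hω'k, wordProd_append, hω']⟩
      · exact (ω'.eraseIdx_sublist k).trans (ω'_sublist.trans (List.sublist_append_left ω [i]))
      · rw [CoxeterSystem.IsReduced, hω'k, List.length_eraseIdx_of_lt hk, ← ω'_reduced.eq]
        omega

end StrongExchange

/-! ### The Bruhat graph and the subword property -/

variable (cs) in
/-- The arrows `u → v` of the Bruhat graph: `v` is longer than `u` and differs from it by a
reflection. -/
def BruhatStep (u v : W) : Prop :=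
  ∃ t, cs.IsReflection t ∧ v = u * t ∧ ℓ u < ℓ v

theorem bruhatStep_mul_simple {u : W} {i : B} (h : ¬cs.IsRightDescent u i) :
    BruhatStep cs u (u * s i) :=
  ⟨s i, cs.isReflection_simple i, rfl, by rw [cs.not_isRightDescent_iff.mp h]; omega⟩

theorem bruhatStep_simple_mul {u : W} {i : B} (h : ¬cs.IsLeftDescent u i) :
    BruhatStep cs u (s i * u) :=
  ⟨u⁻¹ * s i * u, ⟨u⁻¹, i, by simp⟩, by group, by rw [cs.not_isLeftDescent_iff.mp h]; omega⟩

theorem BruhatStep.simple_mul {u v : W} (h : BruhatStep cs u v) (i : B) :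
    s i * u = v ∨ BruhatStep cs (s i * u) (s i * v) := by
  obtain ⟨t, ht, rfl, length_lt⟩ := h
  rcases (ht.length_mul_left_ne (s i * u)).lt_or_gt with length_lt' | length_lt'
  · left
    obtain ⟨ω, ω_reduced, rfl⟩ := cs.exists_isReduced u
    rw [← wordProd_cons] at length_lt' ⊢
    obtain ⟨k, hk, hωk⟩ := exists_wordProd_eraseIdx_eq_of_isRightInversion ⟨ht, length_lt'⟩
    cases k with
    | zero =>
      rw [List.eraseIdx_cons_zero] at hωk
      rw [← mul_inv_eq_iff_eq_mul, ht.inv, ← hωk]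
    | succ k =>
      rw [List.eraseIdx_cons_succ, wordProd_cons, wordProd_cons, mul_assoc, mul_right_inj] at hωk
      have length_le := cs.length_wordProd_le (ω.eraseIdx k)
      rw [hωk, List.length_eraseIdx_of_lt (by simpa using hk), ← ω_reduced.eq] at length_le
      omega
  · exact .inr ⟨t, ht, by rw [mul_assoc], by rwa [← mul_assoc]⟩

theorem reflTransGen_bruhatStep_simple_mul {u v : W} (h : ReflTransGen (BruhatStep cs) u v)
    (i : B) : ReflTransGen (BruhatStep cs) (s i * u) v ∨
      ReflTransGen (BruhatStep cs) (s i * u) (s i * v) := by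
  induction h with
  | refl => exact .inr .refl
  | tail _ step ih =>
    rcases ih with le | le
    · exact .inl (le.tail step)
    · rcases step.simple_mul i with rfl | step'
      · exact .inl le
      · exact .inr (le.tail step')

theorem reflTransGen_bruhatStep_of_sublist {ω ω' : List B} (h : ω'.Sublist ω)
    (hω : cs.IsReduced ω) : ReflTransGen (BruhatStep cs) (π ω') (π ω) := by
  induction h with
  | slnil => exact .refl
  | @cons _ ω i _ ih =>
    have ω_reduced : cs.IsReduced ω := hω.drop 1
    have step : BruhatStep cs (π ω) (s i * π ω) := bruhatStep_simple_mul <| by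
      rw [cs.not_isLeftDescent_iff, ← wordProd_cons, hω.eq, ω_reduced.eq, List.length_cons]
    exact wordProd_cons cs i ω ▸ (ih ω_reduced).tail step
  | @cons_cons _ ω i _ ih =>
    have ω_reduced : cs.IsReduced ω := hω.drop 1
    have step : BruhatStep cs (π ω) (s i * π ω) := bruhatStep_simple_mul <| by
      rw [cs.not_isLeftDescent_iff, ← wordProd_cons, hω.eq, ω_reduced.eq, List.length_cons]
    rw [wordProd_cons, wordProd_cons]
    exact (reflTransGen_bruhatStep_simple_mul (ih ω_reduced) i).elim (·.tail step) id

theorem exists_isReduced_sublist_of_reflTransGen {u : W} {ω : List B}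
    (h : ReflTransGen (BruhatStep cs) u (π ω)) :
    ∃ ω' : List B, ω'.Sublist ω ∧ cs.IsReduced ω' ∧ π ω' = u := by
  generalize hv : π ω = v at h
  induction h generalizing ω with
  | refl => exact hv ▸ exists_isReduced_sublist cs ω
  | @tail v _ _ step ih =>
    obtain ⟨t, ht, rfl, length_lt⟩ := step
    have mul_t : π ω * t = v := by rw [hv, mul_assoc, ht.mul_self, mul_one]
    obtain ⟨k, -, hωk⟩ := exists_wordProd_eraseIdx_eq_of_isRightInversion
      (⟨ht, by rwa [mul_t, hv]⟩ : cs.IsRightInversion (π ω) t)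
    obtain ⟨ω', ω'_sublist, hω'⟩ := ih (hωk.trans mul_t)
    exact ⟨ω', ω'_sublist.trans (ω.eraseIdx_sublist k), hω'⟩

theorem bruhatLE_iff_reflTransGen {u v : W} :
    cs.bruhatLE u v ↔ ReflTransGen (BruhatStep cs) u v := by
  constructor
  · rintro ⟨ω, ω_reduced, rfl, ω', ω'_sublist, -, rfl⟩
    exact reflTransGen_bruhatStep_of_sublist ω'_sublist ω_reduced
  · intro h
    obtain ⟨ω, ω_reduced, rfl⟩ := cs.exists_isReduced v
    exact ⟨ω, ω_reduced, rfl, exists_isReduced_sublist_of_reflTransGen h⟩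

theorem exists_isReduced_sublist_of_bruhatLE {u : W} {ω : List B} (h : cs.bruhatLE u (π ω)) :
    ∃ ω' : List B, ω'.Sublist ω ∧ cs.IsReduced ω' ∧ π ω' = u :=
  exists_isReduced_sublist_of_reflTransGen (bruhatLE_iff_reflTransGen.mp h)

/-! ### The Bruhat order and multiplication by simple reflections -/

theorem BruhatStep.bruhatLE {u v : W} (h : BruhatStep cs u v) : cs.bruhatLE u v :=
  bruhatLE_iff_reflTransGen.mpr (.single h)

variable (cs) in
theorem bruhatLE_refl (u : W) : cs.bruhatLE u u :=
  bruhatLE_iff_reflTransGen.mpr .refl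

theorem bruhatLE_trans {u v w : W} (huv : cs.bruhatLE u v) (hvw : cs.bruhatLE v w) :
    cs.bruhatLE u w :=
  bruhatLE_iff_reflTransGen.mpr <|
    (bruhatLE_iff_reflTransGen.mp huv).trans (bruhatLE_iff_reflTransGen.mp hvw)

theorem length_le_of_bruhatLE {u v : W} (h : cs.bruhatLE u v) : ℓ u ≤ ℓ v := by
  obtain ⟨ω, ω_reduced, rfl, ω', ω'_sublist, ω'_reduced, rfl⟩ := h
  simpa only [ω_reduced.eq, ω'_reduced.eq] using ω'_sublist.length_le

theorem bruhatLE_antisymm {u v : W} (huv : cs.bruhatLE u v) (hvu : cs.bruhatLE v u) : u = v := by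
  have length_le := length_le_of_bruhatLE hvu
  obtain ⟨ω, ω_reduced, rfl, ω', ω'_sublist, ω'_reduced, rfl⟩ := huv
  rw [ω_reduced.eq, ω'_reduced.eq] at length_le
  rw [ω'_sublist.eq_of_length_le length_le]

theorem bruhatLE_inv {u v : W} (h : cs.bruhatLE u v) : cs.bruhatLE u⁻¹ v⁻¹ := by
  obtain ⟨ω, ω_reduced, rfl, ω', ω'_sublist, ω'_reduced, rfl⟩ := h
  exact ⟨ω.reverse, ω_reduced.reverse, cs.wordProd_reverse ω,
    ω'.reverse, ω'_sublist.reverse, ω'_reduced.reverse, cs.wordProd_reverse ω'⟩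

theorem simple_mul_bruhatLE_or {u v : W} (h : cs.bruhatLE u v) (i : B) :
    cs.bruhatLE (s i * u) v ∨ cs.bruhatLE (s i * u) (s i * v) := by
  simpa only [bruhatLE_iff_reflTransGen] using
    reflTransGen_bruhatStep_simple_mul (bruhatLE_iff_reflTransGen.mp h) i

theorem mul_simple_bruhatLE_or {u v : W} (h : cs.bruhatLE u v) (i : B) :
    cs.bruhatLE (u * s i) v ∨ cs.bruhatLE (u * s i) (v * s i) := by
  simpa using (simple_mul_bruhatLE_or (bruhatLE_inv h) i).imp bruhatLE_inv bruhatLE_inv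

theorem bruhatLE_simple_mul {u v : W} {i : B} (h : cs.bruhatLE u v)
    (hi : ¬cs.IsLeftDescent u i) : cs.bruhatLE u (s i * v) := by
  by_cases hv : cs.IsLeftDescent v i
  · obtain ⟨ω, ω_reduced, hω⟩ := cs.exists_isReduced (s i * v)
    have v_eq : v = π (i :: ω) := by rw [wordProd_cons, ← hω, simple_mul_simple_cancel_left]
    obtain ⟨ω', ω'_sublist, ω'_reduced, rfl⟩ := exists_isReduced_sublist_of_bruhatLE (v_eq ▸ h)
    cases ω'_sublist with
    | cons _ ω'_sublist => exact ⟨ω, ω_reduced, hω.symm, ω', ω'_sublist, ω'_reduced, rfl⟩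
    | @cons_cons τ _ _ _ =>
      refine absurd ?_ hi
      rw [IsLeftDescent, ω'_reduced.eq, wordProd_cons, simple_mul_simple_cancel_left]
      exact Nat.lt_succ_of_le (cs.length_wordProd_le τ)
  · exact bruhatLE_trans h (bruhatStep_simple_mul hv).bruhatLE

theorem bruhatLE_mul_simple {u v : W} {i : B} (h : cs.bruhatLE u v)
    (hi : ¬cs.IsRightDescent u i) : cs.bruhatLE u (v * s i) := by
  simpa using bruhatLE_inv (bruhatLE_simple_mul (bruhatLE_inv h)
    (cs.isLeftDescent_inv_iff.not.mpr hi))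

/-! ### Parabolic subgroups and double cosets -/

theorem simple_mem_parabolic {K : Set B} {k : B} (hk : k ∈ K) : s k ∈ cs.parabolic K :=
  Subgroup.subset_closure (Set.mem_image_of_mem _ hk)

theorem mul_mem_of_forall_mul_simple_mem {K : Set B} {X : Set W}
    (hX : ∀ x ∈ X, ∀ k ∈ K, x * s k ∈ X) {x b : W} (hx : x ∈ X) (hb : b ∈ cs.parabolic K) :
    x * b ∈ X := by
  induction hb using Subgroup.closure_induction_right with
  | one => rwa [mul_one]
  | mul_right b _ _ hk ih =>
    obtain ⟨k, hk, rfl⟩ := hk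
    rw [← mul_assoc]
    exact hX _ ih k hk
  | mul_inv_cancel b _ _ hk ih =>
    obtain ⟨k, hk, rfl⟩ := hk
    rw [inv_simple, ← mul_assoc]
    exact hX _ ih k hk

theorem mul_mem_of_forall_simple_mul_mem {J : Set B} {X : Set W}
    (hX : ∀ x ∈ X, ∀ j ∈ J, s j * x ∈ X) {a x : W} (ha : a ∈ cs.parabolic J) (hx : x ∈ X) :
    a * x ∈ X := by
  have hX_inv : ∀ y ∈ X⁻¹, ∀ j ∈ J, y * s j ∈ X⁻¹ := fun y hy j hj ↦ by
    simpa using hX y⁻¹ hy j hj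
  simpa using mul_mem_of_forall_mul_simple_mem hX_inv (Set.inv_mem_inv.mpr hx) (inv_mem ha)

theorem doubleCoset_subset {J K : Set B} {X : Set W} {w : W} (hw : w ∈ X)
    (hJ : ∀ x ∈ X, ∀ j ∈ J, s j * x ∈ X) (hK : ∀ x ∈ X, ∀ k ∈ K, x * s k ∈ X) :
    cs.doubleCoset J K w ⊆ X := by
  rintro _ ⟨a, ha, b, hb, rfl⟩
  exact mul_mem_of_forall_mul_simple_mem hK (mul_mem_of_forall_simple_mul_mem hJ ha hw) hb

variable (cs) in
theorem doubleCoset_eq_doubleCoset (J K : Set B) (w : W) :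
    cs.doubleCoset J K w = DoubleCoset.doubleCoset w (cs.parabolic J) (cs.parabolic K) := by
  ext x
  exact DoubleCoset.mem_doubleCoset.symm

variable (cs) in
theorem mem_doubleCoset_self (J K : Set B) (w : W) : w ∈ cs.doubleCoset J K w :=
  doubleCoset_eq_doubleCoset cs J K w ▸ DoubleCoset.mem_doubleCoset_self _ _ w

theorem doubleCoset_eq_of_mem {J K : Set B} {w x : W} (hx : x ∈ cs.doubleCoset J K w) :
    cs.doubleCoset J K x = cs.doubleCoset J K w := by
  rw [doubleCoset_eq_doubleCoset] at hx
  rw [doubleCoset_eq_doubleCoset, doubleCoset_eq_doubleCoset, DoubleCoset.doubleCoset_eq_of_mem hx]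

theorem simple_mul_mem_doubleCoset {J K : Set B} {w x : W} (hx : x ∈ cs.doubleCoset J K w)
    {j : B} (hj : j ∈ J) : s j * x ∈ cs.doubleCoset J K w :=
  doubleCoset_eq_of_mem hx ▸ ⟨s j, simple_mem_parabolic hj, 1, one_mem _, (mul_one _).symm⟩

theorem mul_mem_doubleCoset {J K : Set B} {w x b : W} (hx : x ∈ cs.doubleCoset J K w)
    (hb : b ∈ cs.parabolic K) : x * b ∈ cs.doubleCoset J K w :=
  doubleCoset_eq_of_mem hx ▸ ⟨1, one_mem _, b, hb, by rw [one_mul]⟩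

/-! ### Minimal coset representatives -/

theorem bruhatLE_mul_of_mem_parabolic {K : Set B} {u v b : W}
    (hu : ∀ k ∈ K, ¬cs.IsRightDescent u k) (h : cs.bruhatLE u v) (hb : b ∈ cs.parabolic K) :
    cs.bruhatLE u (v * b) :=
  mul_mem_of_forall_mul_simple_mem (X := {x | cs.bruhatLE u x})
    (fun _ hx k hk ↦ bruhatLE_mul_simple hx (hu k hk)) h hb

theorem mem_minLengthReps_iff {K : Set B} {w : W} :
    w ∈ cs.minLengthReps K ↔ ∀ k ∈ K, ¬cs.IsRightDescent w k :=
  ⟨fun hw k hk ↦ (hw (s k) (simple_mem_parabolic hk)).not_gt, fun hw _ hb ↦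
    length_le_of_bruhatLE (bruhatLE_mul_of_mem_parabolic hw (bruhatLE_refl cs w) hb)⟩

theorem exists_mul_simple_bruhatLE_mul {K : Set B} {z x : W} {k : B} (hk : k ∈ K)
    (hx : ∃ b ∈ cs.parabolic K, cs.bruhatLE x (z * b)) :
    ∃ b ∈ cs.parabolic K, cs.bruhatLE (x * s k) (z * b) := by
  obtain ⟨b, hb, le⟩ := hx
  rcases mul_simple_bruhatLE_or le k with le' | le'
  · exact ⟨b, hb, le'⟩
  · exact ⟨b * s k, mul_mem hb (simple_mem_parabolic hk), by rwa [← mul_assoc]⟩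

theorem exists_mul_bruhatLE_mul {K : Set B} {u v b : W} (h : cs.bruhatLE u v)
    (hb : b ∈ cs.parabolic K) : ∃ b' ∈ cs.parabolic K, cs.bruhatLE (u * b) (v * b') :=
  mul_mem_of_forall_mul_simple_mem (X := {x | ∃ b' ∈ cs.parabolic K, cs.bruhatLE x (v * b')})
    (fun _ hx _ hk ↦ exists_mul_simple_bruhatLE_mul hk hx) ⟨1, one_mem _, by rwa [mul_one]⟩ hb

theorem simple_mul_mem_minLengthReps_or_eq_mul_simple {K : Set B} {z : W}
    (hz : z ∈ cs.minLengthReps K) (j : B) :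
    s j * z ∈ cs.minLengthReps K ∨ ∃ k ∈ K, s j * z = z * s k := by
  rw [or_iff_not_imp_left, mem_minLengthReps_iff]
  push Not
  rintro ⟨k, hk, k_descent⟩
  have step := bruhatStep_mul_simple (mem_minLengthReps_iff.mp hz k hk)
  refine ⟨k, hk, (step.simple_mul j).resolve_right fun ⟨_, _, _, length_lt⟩ ↦ ?_⟩
  rw [← mul_assoc] at length_lt
  exact lt_asymm length_lt k_descent

/-! ### Extremal elements of double cosets -/

theorem bruhatLE_of_mem_doubleCoset {J K : Set B} {d x : W}
    (hJ : ∀ j ∈ J, ¬cs.IsLeftDescent d j) (hK : ∀ k ∈ K, ¬cs.IsRightDescent d k)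
    (hx : x ∈ cs.doubleCoset J K d) : cs.bruhatLE d x :=
  doubleCoset_subset (X := {y | cs.bruhatLE d y}) (bruhatLE_refl cs d)
    (fun _ hy j hj ↦ bruhatLE_simple_mul hy (hJ j hj))
    (fun _ hy k hk ↦ bruhatLE_mul_simple hy (hK k hk)) hx

theorem exists_simple_mul_bruhatLE_mul {K : Set B} {z x : W} {j : B}
    (hj : cs.IsLeftDescent z j ∨ ∃ k ∈ K, s j * z = z * s k)
    (hx : ∃ b ∈ cs.parabolic K, cs.bruhatLE x (z * b)) :
    ∃ b ∈ cs.parabolic K, cs.bruhatLE (s j * x) (z * b) := by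
  obtain ⟨b, hb, le⟩ := hx
  rcases simple_mul_bruhatLE_or le j with le' | le'
  · exact ⟨b, hb, le'⟩
  rw [← mul_assoc] at le'
  rcases hj with j_descent | ⟨k, hk, sz_eq⟩
  · have sz_le : cs.bruhatLE (s j * z) z := by
      simpa using (bruhatStep_simple_mul
        (cs.isLeftDescent_iff_not_isLeftDescent_mul.mp j_descent)).bruhatLE
    obtain ⟨b', hb', szb_le⟩ := exists_mul_bruhatLE_mul sz_le hb
    exact ⟨b', hb', bruhatLE_trans le' szb_le⟩
  · exact ⟨s k * b, mul_mem (simple_mem_parabolic hk) hb, by rwa [← mul_assoc, ← sz_eq]⟩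

theorem bruhatLE_of_mem_doubleCoset_inter_minLengthReps {J K : Set B} {z u : W}
    (hz : z ∈ cs.minLengthReps K)
    (hJ : ∀ j ∈ J, s j * z ∈ cs.minLengthReps K → cs.IsLeftDescent z j)
    (hu : u ∈ cs.doubleCoset J K z ∩ cs.minLengthReps K) : cs.bruhatLE u z := by
  have descent_or : ∀ j ∈ J, cs.IsLeftDescent z j ∨ ∃ k ∈ K, s j * z = z * s k := fun j hj ↦
    (simple_mul_mem_minLengthReps_or_eq_mul_simple hz j).imp_left (hJ j hj)
  obtain ⟨b, hb, le⟩ : ∃ b ∈ cs.parabolic K, cs.bruhatLE u (z * b) :=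
    doubleCoset_subset (X := {x | ∃ b ∈ cs.parabolic K, cs.bruhatLE x (z * b)})
      ⟨1, one_mem _, by simpa using bruhatLE_refl cs z⟩
      (fun _ hx j hj ↦ exists_simple_mul_bruhatLE_mul (descent_or j hj) hx)
      (fun _ hx _ hk ↦ exists_mul_simple_bruhatLE_mul hk hx) hu.1
  simpa using bruhatLE_mul_of_mem_parabolic (mem_minLengthReps_iff.mp hu.2) le (inv_mem hb)

variable (cs) in
theorem exists_bruhatLE_least (J K : Set B) (w : W) :
    ∃ d ∈ cs.doubleCoset J K w ∩ cs.minLengthReps K,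
      ∀ x ∈ cs.doubleCoset J K w, cs.bruhatLE d x := by
  obtain ⟨d, hd, minimal⟩ := exists_minimalFor_of_wellFoundedLT (· ∈ cs.doubleCoset J K w) cs.length
    ⟨w, mem_doubleCoset_self cs J K w⟩
  have length_le : ∀ x ∈ cs.doubleCoset J K w, ℓ d ≤ ℓ x := fun x hx ↦
    (le_total (ℓ d) (ℓ x)).elim id (minimal hx)
  have hdK : d ∈ cs.minLengthReps K := fun _ hb ↦ length_le _ (mul_mem_doubleCoset hd hb)
  refine ⟨d, ⟨hd, hdK⟩, fun x hx ↦ bruhatLE_of_mem_doubleCoset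
    (fun j hj ↦ (length_le _ (simple_mul_mem_doubleCoset hd hj)).not_gt)
    (mem_minLengthReps_iff.mp hdK) (doubleCoset_eq_of_mem hd ▸ hx)⟩

theorem exists_bruhatLE_greatest {J K : Set B} {w : W}
    (hfin : (cs.doubleCoset J K w ∩ cs.minLengthReps K).Finite) :
    ∃ z ∈ cs.doubleCoset J K w ∩ cs.minLengthReps K,
      ∀ u ∈ cs.doubleCoset J K w ∩ cs.minLengthReps K, cs.bruhatLE u z := by
  obtain ⟨d, hd, -⟩ := exists_bruhatLE_least cs J K w
  obtain ⟨z, ⟨hz, hzK⟩, length_le⟩ := Set.exists_max_image _ cs.length hfin ⟨d, hd⟩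
  refine ⟨z, ⟨hz, hzK⟩, fun u hu ↦ bruhatLE_of_mem_doubleCoset_inter_minLengthReps hzK
    (fun j hj hsz ↦ ?_) ((doubleCoset_eq_of_mem hz).symm ▸ hu)⟩
  exact (length_le _ ⟨simple_mul_mem_doubleCoset hz hj, hsz⟩).lt_of_ne (cs.length_simple_mul_ne z j)

end BruhatOrder

open BruhatOrder in
theorem stmt_0_general {B W : Type*} [Group W] {M : CoxeterMatrix B}
    (cs : CoxeterSystem M W) (J K : Set B) (w : W) :
    (∃! wmin : W, wmin ∈ cs.doubleCoset J K w ∩ cs.minLengthReps K ∧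
      ∀ u ∈ cs.doubleCoset J K w ∩ cs.minLengthReps K, cs.bruhatLE wmin u) ∧
    ((cs.doubleCoset J K w ∩ cs.minLengthReps K).Finite →
      ∃! wmax : W, wmax ∈ cs.doubleCoset J K w ∩ cs.minLengthReps K ∧
        ∀ u ∈ cs.doubleCoset J K w ∩ cs.minLengthReps K, cs.bruhatLE u wmax) := by
  constructor
  · obtain ⟨d, hd, least⟩ := exists_bruhatLE_least cs J K w
    exact ⟨d, ⟨hd, fun u hu ↦ least u hu.1⟩,
      fun y ⟨hy, y_least⟩ ↦ bruhatLE_antisymm (y_least d hd) (least y hy.1)⟩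
  · intro hfin
    obtain ⟨z, hz, greatest⟩ := exists_bruhatLE_greatest hfin
    exact ⟨z, ⟨hz, greatest⟩,
      fun y ⟨hy, y_greatest⟩ ↦ bruhatLE_antisymm (greatest y hy) (y_greatest z hz)⟩

/-- In a finite Coxeter system, the intersection of a double coset `W_J · w · W_K`
with `W^K` has a unique Bruhat-minimal and a unique Bruhat-maximal element. -/
theorem stmt_0 {B W : Type*} [Group W] [Finite W] {M : CoxeterMatrix B}
    (cs : CoxeterSystem M W) (J K : Set B) (w : W) :
    (∃! wmin : W, wmin ∈ cs.doubleCoset J K w ∩ cs.minLengthReps K ∧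
      ∀ u ∈ cs.doubleCoset J K w ∩ cs.minLengthReps K, cs.bruhatLE wmin u) ∧
    (∃! wmax : W, wmax ∈ cs.doubleCoset J K w ∩ cs.minLengthReps K ∧
      ∀ u ∈ cs.doubleCoset J K w ∩ cs.minLengthReps K, cs.bruhatLE u wmax) :=
  (stmt_0_general cs J K w).imp_right fun h ↦ h (Set.toFinite _)
end

section
/- Let (W,S) be a finite Coxeter system, J, K ⊆ S, and w ∈ W. Let w_min and w_max be the unique Bruhat-minimal and Bruhat-maximal elements of (W_J·w·W_K) ∩ W^K. Then (W_J·w·W_K) ∩ W^K is the full Bruhat interval in W^K, i.e. (W_J·w·W_K) ∩ W^K = { u ∈ W^K : w_min ≤ u ≤ w_max }. -/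
/-!
The Bruhat order has the subword property for every word of the larger element, reduced or not;
this comes from strong exchange, which in turn rests on the action of `W` on signed elements of `W`.
Let `x` be of minimal length in its double coset, with reduced word `l`, and let `x ≤ u ≤ v` with
`v` in the same double coset. Write `v` as a word `a ++ l ++ b` with letters of `a` in `J` and
of `b` in `K`. Then `u` is a subword `a' ++ l' ++ b'`, and `x` is a subword `a'' ++ l'' ++ b''` of
that. The product of `l''` lies in the double coset too, so minimality forces `l'' = l`, hence
`l' = l`, and `u` lies in the double coset. A Bruhat-minimum of the double coset within `W^K` has
minimal length in the whole double coset, because every coset of `W_K` meets `W^K` in an element of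
minimal length.
-/

namespace CoxeterBruhat

open CoxeterSystem List

variable {B W : Type*} [Group W] {M : CoxeterMatrix B} (cs : CoxeterSystem M W)

section SignedConjugation

theorem prod_map_reverse_alternatingWord {G : Type*} [Monoid G] (f : B → G) (i j : B) (m : ℕ) :
    ((alternatingWord i j (2 * m)).reverse.map f).prod = (f j * f i) ^ m := by
  induction m with
  | zero => simp [alternatingWord]
  | succ m ih =>
    rw [mul_add_one, alternatingWord_succ, alternatingWord_succ, pow_succ', ← ih]
    simp [mul_assoc]

theorem wordProd_alternatingWord_add_period (i j : B) (k : ℕ) :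
    cs.wordProd (alternatingWord i j (2 * (M i j + k) + 1)) =
      cs.wordProd (alternatingWord i j (2 * k + 1)) := by
  have half (n : ℕ) : (2 * n + 1) / 2 = n := by lia
  simp [prod_alternatingWord_eq_mul_pow, half, pow_add]

theorem leftInvSeq_alternatingWord (i j : B) (p : ℕ) :
    cs.leftInvSeq (alternatingWord i j (2 * p)) =
      (range (2 * p)).map fun k ↦ cs.wordProd (alternatingWord j i (2 * k + 1)) :=
  List.ext_getElem (by simp) fun k hk _ ↦ by
    simp [getElem_leftInvSeq_alternatingWord cs i j p k (by simpa using hk)]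

variable [DecidableEq W]

theorem even_count_leftInvSeq_alternatingWord (i j : B) (t : W) :
    Even ((cs.leftInvSeq (alternatingWord i j (2 * M i j))).count t) := by
  rw [leftInvSeq_alternatingWord, two_mul, range_add, map_append, map_map, M.symmetric i j]
  simp [Function.comp_def, wordProd_alternatingWord_add_period]

/-- The permutation of `W × ZMod 2` by which the simple reflection `s i` acts on signed elements of
`W`: it conjugates the element and changes the sign of `s i` only. The domain is usually taken to
be the signed reflections; allowing all of `W` avoids a subtype. -/
def signedConj (i : B) : Equiv.Perm (W × ZMod 2) :=
  Equiv.prodShear (MulAut.conj (cs.simple i)).toEquiv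
    fun t ↦ Equiv.addRight (if t = cs.simple i then 1 else 0)

theorem signedConj_apply (i : B) (t : W) (e : ZMod 2) :
    signedConj cs i (t, e) =
      (cs.simple i * t * (cs.simple i)⁻¹, e + if t = cs.simple i then 1 else 0) :=
  rfl

theorem prod_signedConj_apply (ω : List B) (t : W) (e : ZMod 2) :
    (ω.map (signedConj cs)).prod (t, e) =
      (cs.wordProd ω * t * (cs.wordProd ω)⁻¹, e + (cs.rightInvSeq ω).count t) := by
  induction ω with
  | nil => simp
  | cons i ω ih =>
    have conj_eq_iff : cs.wordProd ω * t * (cs.wordProd ω)⁻¹ = cs.simple i ↔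
        (cs.wordProd ω)⁻¹ * cs.simple i * cs.wordProd ω = t := by
      rw [mul_inv_eq_iff_eq_mul, mul_assoc, inv_mul_eq_iff_eq_mul, eq_comm]
    rw [map_cons, prod_cons, Equiv.Perm.mul_apply, ih, signedConj_apply]
    simp only [conj_eq_iff]
    simp [rightInvSeq, wordProd_cons, count_cons, mul_assoc, add_assoc]

theorem isLiftable_signedConj : M.IsLiftable (signedConj cs) := by
  intro i j
  have word_trivial : cs.wordProd (alternatingWord j i (2 * M j i)).reverse = 1 := by
    rw [wordProd, prod_map_reverse_alternatingWord, simple_mul_simple_pow']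
  have count_even (t : W) :
      ((cs.rightInvSeq (alternatingWord j i (2 * M j i)).reverse).count t : ZMod 2) = 0 := by
    rw [rightInvSeq_reverse, count_reverse, ZMod.natCast_eq_zero_iff_even]
    exact even_count_leftInvSeq_alternatingWord cs j i t
  rw [M.symmetric i j, ← prod_map_reverse_alternatingWord]
  ext1 ⟨t, e⟩
  rw [prod_signedConj_apply, word_trivial, count_even]
  simp

/-- The action of `W` on `W × ZMod 2` by signed conjugation, the device behind the strong exchange
property. -/
def signedConjHom : W →* Equiv.Perm (W × ZMod 2) :=
  cs.lift ⟨signedConj cs, isLiftable_signedConj cs⟩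

/-- The sign by which `w` twists `t`. For a reflection `t` it tells whether `t` is a right inversion
of `w`. -/
def inversionParity (w t : W) : ZMod 2 :=
  (signedConjHom cs w (t, 0)).2

theorem signedConjHom_wordProd_apply (ω : List B) (t : W) (e : ZMod 2) :
    signedConjHom cs (cs.wordProd ω) (t, e) =
      (cs.wordProd ω * t * (cs.wordProd ω)⁻¹, e + (cs.rightInvSeq ω).count t) := by
  rw [← prod_signedConj_apply, wordProd, map_list_prod, map_map]
  congr 3
  exact funext fun i ↦ cs.lift_apply_simple (isLiftable_signedConj cs) i

theorem inversionParity_wordProd (ω : List B) (t : W) :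
    inversionParity cs (cs.wordProd ω) t = (cs.rightInvSeq ω).count t := by
  simp [inversionParity, signedConjHom_wordProd_apply]

theorem signedConjHom_apply (w t : W) (e : ZMod 2) :
    signedConjHom cs w (t, e) = (w * t * w⁻¹, e + inversionParity cs w t) := by
  obtain ⟨ω, rfl⟩ := cs.wordProd_surjective w
  rw [signedConjHom_wordProd_apply, inversionParity_wordProd]

theorem inversionParity_mul (u v t : W) :
    inversionParity cs (u * v) t =
      inversionParity cs v t + inversionParity cs u (v * t * v⁻¹) := by
  rw [inversionParity, map_mul, Equiv.Perm.mul_apply, signedConjHom_apply, signedConjHom_apply,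
    zero_add]

theorem inversionParity_one (t : W) : inversionParity cs 1 t = 0 := by
  simp [inversionParity]

theorem inversionParity_simple_self (i : B) :
    inversionParity cs (cs.simple i) (cs.simple i) = 1 := by
  simpa using inversionParity_wordProd cs [i] (cs.simple i)

theorem inversionParity_self {t : W} (ht : cs.IsReflection t) : inversionParity cs t t = 1 := by
  obtain ⟨u, i, rfl⟩ := ht
  have cancel : inversionParity cs u⁻¹ (u * cs.simple i * u⁻¹) +
      inversionParity cs u (cs.simple i) = 0 := by
    simpa [mul_assoc, inversionParity_one] using
      (inversionParity_mul cs u u⁻¹ (u * cs.simple i * u⁻¹)).symm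
  have split : inversionParity cs (u * cs.simple i * u⁻¹) (u * cs.simple i * u⁻¹) =
      inversionParity cs u⁻¹ (u * cs.simple i * u⁻¹) + 1 + inversionParity cs u (cs.simple i) := by
    simp [inversionParity_mul, mul_assoc, inversionParity_simple_self]
  rw [split, add_right_comm, cancel, zero_add]

theorem isRightInversion_of_inversionParity_ne_zero {w t : W} (h : inversionParity cs w t ≠ 0) :
    cs.IsRightInversion w t := by
  obtain ⟨ω, hω, rfl⟩ := cs.exists_isReduced w
  refine cs.isRightInversion_of_mem_rightInvSeq hω ?_
  contrapose! h
  rw [inversionParity_wordProd, count_eq_zero_of_not_mem h, Nat.cast_zero]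

theorem inversionParity_ne_zero_of_isRightInversion {w t : W} (h : cs.IsRightInversion w t) :
    inversionParity cs w t ≠ 0 := by
  intro h0
  have hwt : inversionParity cs (w * t) t ≠ 0 := by
    simp [inversionParity_mul, inversionParity_self cs h.1, h0]
  exact h.1.isRightInversion_mul_left_iff.mp
    (isRightInversion_of_inversionParity_ne_zero cs hwt) h

end SignedConjugation

section StrongExchange

theorem mem_rightInvSeq_of_isRightInversion {ω : List B} {t : W}
    (h : cs.IsRightInversion (cs.wordProd ω) t) : t ∈ cs.rightInvSeq ω := by
  classical
  by_contra hn
  apply inversionParity_ne_zero_of_isRightInversion cs h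
  rw [inversionParity_wordProd, count_eq_zero_of_not_mem hn, Nat.cast_zero]

theorem exists_wordProd_eraseIdx_of_isRightInversion {ω : List B} {t : W}
    (h : cs.IsRightInversion (cs.wordProd ω) t) :
    ∃ j, cs.wordProd ω * t = cs.wordProd (ω.eraseIdx j) := by
  obtain ⟨j, hj, rfl⟩ := mem_iff_getElem.mp (mem_rightInvSeq_of_isRightInversion cs h)
  exact ⟨j, by rw [← wordProd_mul_getD_rightInvSeq, getD_eq_getElem _ _ hj]⟩

end StrongExchange

section BruhatGraph

/-- The edge relation of the Bruhat graph: `u` arises from `v` by a length-decreasing right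
multiplication by a reflection. -/
def BruhatEdge (u v : W) : Prop :=
  ∃ t, cs.IsRightInversion v t ∧ v * t = u

/-- Reachability in the Bruhat graph. By the subword property it is the Bruhat order, described
without a choice of words. -/
def BruhatPath : W → W → Prop :=
  Relation.ReflTransGen (BruhatEdge cs)

variable {cs}

theorem bruhatEdge_simple_mul_wordProd {i : B} {l : List B} (h : cs.IsReduced (i :: l)) :
    BruhatEdge cs (cs.wordProd l) (cs.simple i * cs.wordProd l) := by
  have hdown : cs.simple i * cs.wordProd l * ((cs.wordProd l)⁻¹ * cs.simple i * cs.wordProd l) =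
      cs.wordProd l := by simp [mul_assoc]
  have hlength : cs.length (cs.wordProd l) < cs.length (cs.simple i * cs.wordProd l) := by
    rw [← wordProd_cons, h.eq, length_cons]
    exact Nat.lt_succ_of_le (cs.length_wordProd_le l)
  refine ⟨(cs.wordProd l)⁻¹ * cs.simple i * cs.wordProd l, ⟨?_, by rwa [hdown]⟩, hdown⟩
  simpa using (cs.isReflection_simple i).conj (cs.wordProd l)⁻¹

theorem simple_mul_eq_mul_of_isRightInversion {u t : W} {i : B}
    (h : cs.IsRightInversion (cs.simple i * u) t) (hu : ¬ cs.IsRightInversion u t) :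
    cs.simple i * u = u * t := by
  obtain ⟨ω, hω, rfl⟩ := cs.exists_isReduced u
  have hmem : t ∈ cs.rightInvSeq (i :: ω) :=
    mem_rightInvSeq_of_isRightInversion cs (by rwa [wordProd_cons])
  rcases mem_cons.mp hmem with rfl | hmem
  · simp [mul_assoc]
  · exact absurd (cs.isRightInversion_of_mem_rightInvSeq hω hmem) hu

theorem BruhatEdge.simple_mul {u v : W} (h : BruhatEdge cs u v) (i : B) :
    cs.simple i * u = v ∨ BruhatEdge cs (cs.simple i * u) (cs.simple i * v) := by
  obtain ⟨t, hvt, rfl⟩ := h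
  by_cases hsv : cs.IsRightInversion (cs.simple i * v) t
  · exact .inr ⟨t, hsv, mul_assoc ..⟩
  · have hsvt : cs.IsRightInversion (cs.simple i * (v * t)) t := by
      rwa [← mul_assoc, hvt.1.isRightInversion_mul_left_iff]
    have hnot : ¬ cs.IsRightInversion (v * t) t :=
      hvt.1.not_isRightInversion_mul_left_iff.mpr hvt
    left
    rw [simple_mul_eq_mul_of_isRightInversion hsvt hnot, mul_assoc, hvt.1.mul_self, mul_one]

theorem BruhatPath.simple_mul {u v : W} (h : BruhatPath cs u v) (i : B) :
    BruhatPath cs (cs.simple i * u) v ∨ BruhatPath cs (cs.simple i * u) (cs.simple i * v) := by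
  induction h using Relation.ReflTransGen.head_induction_on with
  | refl => exact .inr .refl
  | head edge path ih =>
    rcases edge.simple_mul i with rfl | edge'
    · exact .inl path
    · exact ih.imp (.head edge') (.head edge')

theorem bruhatPath_wordProd_of_sublist {l' l : List B} (h : l' <+ l) (hl : cs.IsReduced l) :
    BruhatPath cs (cs.wordProd l') (cs.wordProd l) := by
  induction h with
  | slnil => exact .refl
  | cons i _ ih =>
    rw [wordProd_cons]
    exact (ih (hl.drop 1)).tail (bruhatEdge_simple_mul_wordProd hl)
  | cons_cons i _ ih =>
    rw [wordProd_cons, wordProd_cons]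
    exact ((ih (hl.drop 1)).simple_mul i).elim (·.tail (bruhatEdge_simple_mul_wordProd hl)) id

theorem BruhatPath.exists_sublist {u : W} {l : List B} (h : BruhatPath cs u (cs.wordProd l)) :
    ∃ l', l' <+ l ∧ cs.wordProd l' = u := by
  generalize hv : cs.wordProd l = v at h
  induction h generalizing l with
  | refl => exact ⟨l, .refl l, hv⟩
  | tail _ edge ih =>
    subst hv
    obtain ⟨t, ht, rfl⟩ := edge
    obtain ⟨j, hj⟩ := exists_wordProd_eraseIdx_of_isRightInversion cs ht
    obtain ⟨l', hl', hu⟩ := ih hj.symm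
    exact ⟨l', hl'.trans (eraseIdx_sublist ..), hu⟩

theorem exists_sublist_of_bruhatLE {u : W} {l : List B} (h : cs.bruhatLE u (cs.wordProd l)) :
    ∃ l', l' <+ l ∧ cs.wordProd l' = u := by
  obtain ⟨m, hm, hml, m', hm', -, rfl⟩ := h
  exact BruhatPath.exists_sublist (hml ▸ bruhatPath_wordProd_of_sublist hm' hm)

theorem length_le_of_bruhatLE {u v : W} (h : cs.bruhatLE u v) : cs.length u ≤ cs.length v := by
  obtain ⟨l, hl, rfl, l', hsub, hl', rfl⟩ := h
  rw [hl.eq, hl'.eq]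
  exact hsub.length_le

end BruhatGraph

section DoubleCosets

variable {cs} {J K : Set B}

theorem mem_parabolic_iff_exists_word {p : W} :
    p ∈ cs.parabolic J ↔ ∃ l : List B, (∀ i ∈ l, i ∈ J) ∧ cs.wordProd l = p := by
  constructor
  · intro hp
    induction hp using Subgroup.closure_induction with
    | mem _ hx =>
      obtain ⟨i, hi, rfl⟩ := hx
      exact ⟨[i], by simpa using hi, by simp⟩
    | one => exact ⟨[], by simp, by simp⟩
    | mul _ _ _ _ hx hy =>
      obtain ⟨l, hl, rfl⟩ := hx
      obtain ⟨m, hm, rfl⟩ := hy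
      exact ⟨l ++ m, forall_mem_append.mpr ⟨hl, hm⟩, wordProd_append ..⟩
    | inv _ _ hx =>
      obtain ⟨l, hl, rfl⟩ := hx
      exact ⟨l.reverse, by simpa using hl, by simp⟩
  · rintro ⟨l, hl, rfl⟩
    refine Subgroup.list_prod_mem _ (forall_mem_map.mpr fun i hi ↦ ?_)
    exact Subgroup.subset_closure (Set.mem_image_of_mem _ (hl i hi))

theorem doubleCoset_eq_coe (x : W) :
    cs.doubleCoset J K x = DoubleCoset.doubleCoset x (cs.parabolic J) (cs.parabolic K) :=
  Set.ext fun _ ↦ DoubleCoset.mem_doubleCoset.symm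

theorem doubleCoset_eq_of_mem {x y : W} (h : y ∈ cs.doubleCoset J K x) :
    cs.doubleCoset J K y = cs.doubleCoset J K x := by
  rw [doubleCoset_eq_coe] at h
  rw [doubleCoset_eq_coe, doubleCoset_eq_coe, DoubleCoset.doubleCoset_eq_of_mem h]

theorem mem_doubleCoset_self (x : W) : x ∈ cs.doubleCoset J K x := by
  rw [doubleCoset_eq_coe]
  exact DoubleCoset.mem_doubleCoset_self _ _ x

theorem mem_doubleCoset_comm {x y : W} :
    x ∈ cs.doubleCoset J K y ↔ y ∈ cs.doubleCoset J K x :=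
  ⟨fun h ↦ doubleCoset_eq_of_mem h ▸ mem_doubleCoset_self y,
    fun h ↦ doubleCoset_eq_of_mem h ▸ mem_doubleCoset_self x⟩

theorem wordProd_append_append_mem_doubleCoset {a b : List B} (l : List B)
    (ha : ∀ i ∈ a, i ∈ J) (hb : ∀ i ∈ b, i ∈ K) :
    cs.wordProd (a ++ l ++ b) ∈ cs.doubleCoset J K (cs.wordProd l) :=
  ⟨_, mem_parabolic_iff_exists_word.mpr ⟨a, ha, rfl⟩,
    _, mem_parabolic_iff_exists_word.mpr ⟨b, hb, rfl⟩, by simp only [wordProd_append]⟩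

theorem exists_word_of_mem_doubleCoset {l : List B} {v : W}
    (hv : v ∈ cs.doubleCoset J K (cs.wordProd l)) :
    ∃ a b : List B, (∀ i ∈ a, i ∈ J) ∧ (∀ i ∈ b, i ∈ K) ∧ cs.wordProd (a ++ l ++ b) = v := by
  obtain ⟨p, hp, q, hq, rfl⟩ := hv
  obtain ⟨a, ha, rfl⟩ := mem_parabolic_iff_exists_word.mp hp
  obtain ⟨b, hb, rfl⟩ := mem_parabolic_iff_exists_word.mp hq
  exact ⟨a, b, ha, hb, by simp only [wordProd_append]⟩

theorem exists_word_of_sublist_append_append {m a l b : List B} (h : m <+ a ++ l ++ b)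
    (ha : ∀ i ∈ a, i ∈ J) (hb : ∀ i ∈ b, i ∈ K) :
    ∃ a' l' b', (∀ i ∈ a', i ∈ J) ∧ (∀ i ∈ b', i ∈ K) ∧ l' <+ l ∧ m = a' ++ l' ++ b' := by
  obtain ⟨_, b', rfl, hal, hb'⟩ := sublist_append_iff.mp h
  obtain ⟨a', l', rfl, ha', hl'⟩ := sublist_append_iff.mp hal
  exact ⟨a', l', b', fun i hi ↦ ha i (ha'.subset hi), fun i hi ↦ hb i (hb'.subset hi), hl', rfl⟩

theorem mem_doubleCoset_of_bruhatLE_of_bruhatLE {x u v : W}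
    (hx : ∀ y ∈ cs.doubleCoset J K x, cs.length x ≤ cs.length y)
    (hv : v ∈ cs.doubleCoset J K x) (hxu : cs.bruhatLE x u) (huv : cs.bruhatLE u v) :
    u ∈ cs.doubleCoset J K x := by
  obtain ⟨l, hl, rfl⟩ := cs.exists_isReduced x
  obtain ⟨a, b, ha, hb, rfl⟩ := exists_word_of_mem_doubleCoset hv
  obtain ⟨m, hm, rfl⟩ := exists_sublist_of_bruhatLE huv
  obtain ⟨a', l', b', ha', hb', hl', rfl⟩ := exists_word_of_sublist_append_append hm ha hb
  obtain ⟨n, hn, hnx⟩ := exists_sublist_of_bruhatLE hxu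
  obtain ⟨a'', l'', b'', ha'', hb'', hl'', rfl⟩ := exists_word_of_sublist_append_append hn ha' hb'
  have hmem : cs.wordProd l'' ∈ cs.doubleCoset J K (cs.wordProd l) :=
    mem_doubleCoset_comm.mp (hnx ▸ wordProd_append_append_mem_doubleCoset l'' ha'' hb'')
  have hlength : l.length ≤ l''.length :=
    hl.eq ▸ (hx _ hmem).trans (cs.length_wordProd_le l'')
  have hl_eq : l' = l := hl'.eq_of_length_le (hlength.trans hl''.length_le)
  exact hl_eq ▸ wordProd_append_append_mem_doubleCoset l' ha' hb'

theorem exists_mul_mem_minLengthReps (K : Set B) (y : W) :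
    ∃ q ∈ cs.parabolic K, y * q ∈ cs.minLengthReps K := by
  obtain ⟨q, hq, hmin⟩ := exists_minimalFor_of_wellFoundedLT (· ∈ cs.parabolic K)
    (fun q ↦ cs.length (y * q)) ⟨1, one_mem _⟩
  refine ⟨q, hq, fun r hr ↦ ?_⟩
  rw [mul_assoc]
  exact le_of_not_gt fun hlt ↦ hlt.not_ge (hmin (mul_mem hq hr) hlt.le)

theorem length_le_of_forall_bruhatLE {x w : W}
    (hx : ∀ u ∈ cs.doubleCoset J K w ∩ cs.minLengthReps K, cs.bruhatLE x u) {y : W}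
    (hy : y ∈ cs.doubleCoset J K w) : cs.length x ≤ cs.length y := by
  obtain ⟨q, hq, hyq⟩ := exists_mul_mem_minLengthReps (cs := cs) K y
  have hyq_mem : y * q ∈ cs.doubleCoset J K w :=
    doubleCoset_eq_of_mem hy ▸ ⟨1, one_mem _, q, hq, by rw [one_mul]⟩
  calc cs.length x ≤ cs.length (y * q) := length_le_of_bruhatLE (hx _ ⟨hyq_mem, hyq⟩)
    _ ≤ cs.length (y * q * q⁻¹) := hyq _ (inv_mem hq)
    _ = cs.length y := by rw [mul_inv_cancel_right]

end DoubleCosets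

end CoxeterBruhat

open CoxeterBruhat

theorem stmt_1_general {B W : Type*} [Group W] {M : CoxeterMatrix B}
    (cs : CoxeterSystem M W) (J K : Set B) (w : W) (wmin wmax : W)
    (hmin : wmin ∈ cs.doubleCoset J K w ∩ cs.minLengthReps K ∧
      ∀ u ∈ cs.doubleCoset J K w ∩ cs.minLengthReps K, cs.bruhatLE wmin u)
    (hmax : wmax ∈ cs.doubleCoset J K w ∩ cs.minLengthReps K ∧
      ∀ u ∈ cs.doubleCoset J K w ∩ cs.minLengthReps K, cs.bruhatLE u wmax) :
    cs.doubleCoset J K w ∩ cs.minLengthReps K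
      = {u | u ∈ cs.minLengthReps K ∧ cs.bruhatLE wmin u ∧ cs.bruhatLE u wmax} := by
  have hcoset : cs.doubleCoset J K wmin = cs.doubleCoset J K w := doubleCoset_eq_of_mem hmin.1.1
  rw [← hcoset] at hmin hmax ⊢
  have hshortest : ∀ y ∈ cs.doubleCoset J K wmin, cs.length wmin ≤ cs.length y :=
    fun _ ↦ length_le_of_forall_bruhatLE hmin.2
  ext u
  constructor
  · exact fun hu ↦ ⟨hu.2, hmin.2 u hu, hmax.2 u hu⟩
  · rintro ⟨huK, hmin_le, hle_max⟩
    exact ⟨mem_doubleCoset_of_bruhatLE_of_bruhatLE hshortest hmax.1.1 hmin_le hle_max, huK⟩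

/-- In a finite Coxeter system, if `wmin` and `wmax` are the unique Bruhat-minimal and
Bruhat-maximal elements of `(W_J · w · W_K) ∩ W^K`, then this set is the full Bruhat
interval `[wmin, wmax]` in `W^K`. -/
theorem stmt_1 {B W : Type*} [Group W] [Finite W] {M : CoxeterMatrix B}
    (cs : CoxeterSystem M W) (J K : Set B) (w : W) (wmin wmax : W)
    (hmin : wmin ∈ cs.doubleCoset J K w ∩ cs.minLengthReps K ∧
      ∀ u ∈ cs.doubleCoset J K w ∩ cs.minLengthReps K, cs.bruhatLE wmin u)
    (hmax : wmax ∈ cs.doubleCoset J K w ∩ cs.minLengthReps K ∧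
      ∀ u ∈ cs.doubleCoset J K w ∩ cs.minLengthReps K, cs.bruhatLE u wmax) :
    cs.doubleCoset J K w ∩ cs.minLengthReps K
      = {u | u ∈ cs.minLengthReps K ∧ cs.bruhatLE wmin u ∧ cs.bruhatLE u wmax} :=
  stmt_1_general cs J K w wmin wmax hmin hmax
end

section
/- Let n ≥ 1, 1 ≤ i ≤ n, 1 ≤ m ≤ n, and consider the symmetric group S_{n+1} of permutations of {1, …, n+1}. Let W_P = {σ ∈ S_{n+1} : σ({1,…,i}) = {1,…,i}} and W_Q = {σ ∈ S_{n+1} : σ({1,…,m}) = {1,…,m}}. Then two permutations σ, τ ∈ S_{n+1} lie in the same (W_P, W_Q) double coset if and only if #{j ∈ {1,…,m} : σ(j) ≤ i} = #{j ∈ {1,…,m} : τ(j) ≤ i}. -/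
/-!
Let `W_P`, `W_Q` be the stabilizers of sets `s`, `t` with `t` finite. Then `τ ∈ W_P σ W_Q` exactly
when some element of `W_Q` moves `A = τ⁻¹ s` to `B = σ⁻¹ s`. Such an element exists once the four
pieces into which `A` and `t` cut the space are equinumerous with those cut by `B` and `t`. As
`#A = #B` and `#Aᶜ = #Bᶜ`, cancelling finite cardinals reduces this to `#(A ∩ t) = #(B ∩ t)`.
-/

section DoubleCosets

open Cardinal MulAction
open scoped Pointwise

universe u

variable {α β : Type u}

theorem mem_doubleCoset_stabilizer_iff {G X : Type*} [Group G] [MulAction G X] {x : X}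
    {K : Set G} {g g' : G} :
    g' ∈ DoubleCoset.doubleCoset g (stabilizer G x) K ↔ ∃ k ∈ K, k • g'⁻¹ • x = g⁻¹ • x := by
  rw [DoubleCoset.mem_doubleCoset]
  constructor
  · rintro ⟨h, hh, k, hk, rfl⟩
    have hx : h⁻¹ • x = x := inv_mem hh
    exact ⟨k, hk, by simp only [mul_inv_rev, mul_smul, hx, smul_inv_smul]⟩
  · rintro ⟨k, hk, hkx⟩
    refine ⟨g' * k⁻¹ * g⁻¹, ?_, k, hk, by group⟩
    rw [SetLike.mem_coe, mem_stabilizer_iff, mul_smul, mul_smul, ← hkx, inv_smul_smul,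
      smul_inv_smul]

theorem mk_sdiff_eq_mk_sdiff {s t : Set α} {s' t' : Set β} (hfin : (s ∩ t).Finite)
    (hs : #s = #s') (hinter : #(s ∩ t : Set α) = #(s' ∩ t' : Set β)) :
    #(s \ t : Set α) = #(s' \ t' : Set β) := by
  have mk_inter_add_mk_sdiff {γ : Type u} (x y : Set γ) :
      #(x ∩ y : Set γ) + #(x \ y : Set γ) = #x := by
    rw [← mk_union_of_disjoint Set.disjoint_sdiff_inter.symm, Set.inter_union_sdiff]
  refine Cardinal.eq_of_add_eq_add_left ?_ hfin.lt_aleph0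
  rw [mk_inter_add_mk_sdiff, hs, hinter, mk_inter_add_mk_sdiff]

theorem exists_equiv_image_eq_and_image_eq {s t : Set α} {s' t' : Set β}
    (hinter : #(s ∩ t : Set α) = #(s' ∩ t' : Set β))
    (hsdiff : #(s \ t : Set α) = #(s' \ t' : Set β))
    (hinter_compl : #(sᶜ ∩ t : Set α) = #(s'ᶜ ∩ t' : Set β))
    (hsdiff_compl : #(sᶜ \ t : Set α) = #(s'ᶜ \ t' : Set β)) :
    ∃ k : α ≃ β, k '' s = s' ∧ k '' t = t' := by
  let f (a : α) : Prop × Prop := (a ∈ s, a ∈ t)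
  let g (b : β) : Prop × Prop := (b ∈ s', b ∈ t')
  have fiber_equiv (c : Prop × Prop) : Nonempty ({a // f a = c} ≃ {b // g b = c}) := by
    rw [← Cardinal.eq]
    obtain ⟨p, q⟩ := c
    by_cases hp : p <;> by_cases hq : q <;>
      simpa only [f, g, hp, hq, Prod.mk.injEq, eq_iff_iff, iff_true, iff_false]
  let k : α ≃ β := Equiv.ofFiberEquiv fun c => (fiber_equiv c).some
  have hk (a : α) : (a ∈ s) = (k a ∈ s') ∧ (a ∈ t) = (k a ∈ t') :=
    Prod.mk.inj (Equiv.ofFiberEquiv_map (f := f) (g := g) _ a).symm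
  exact ⟨k, (k.eq_preimage_iff_image_eq s s').mp (Set.ext fun a => (hk a).1.to_iff),
    (k.eq_preimage_iff_image_eq t t').mp (Set.ext fun a => (hk a).2.to_iff)⟩

theorem exists_mem_stabilizer_smul_eq_iff {A B t : Set α} (ht : t.Finite) (hmk : #A = #B)
    (hmk_compl : #(Aᶜ : Set α) = #(Bᶜ : Set α)) :
    (∃ k ∈ stabilizer (Equiv.Perm α) t, k • A = B) ↔ (A ∩ t).ncard = (B ∩ t).ncard := by
  constructor
  · rintro ⟨k, hk, rfl⟩
    rw [← Set.ncard_smul_set k (A ∩ t), Set.smul_set_inter, mem_stabilizer_iff.mp hk]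
  · intro hcard
    have hinter : #(A ∩ t : Set α) = #(B ∩ t : Set α) := by
      rw [← Set.cast_ncard (ht.inter_of_right A), ← Set.cast_ncard (ht.inter_of_right B), hcard]
    have hinter_compl : #(Aᶜ ∩ t : Set α) = #(Bᶜ ∩ t : Set α) := by
      rw [Set.inter_comm A, Set.inter_comm B] at hinter
      simpa only [Set.sdiff_eq, Set.inter_comm t] using
        mk_sdiff_eq_mk_sdiff (ht.inter_of_left A) rfl hinter
    obtain ⟨k, hkA, hkt⟩ := exists_equiv_image_eq_and_image_eq hinter
      (mk_sdiff_eq_mk_sdiff (ht.inter_of_right A) hmk hinter) hinter_compl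
      (mk_sdiff_eq_mk_sdiff (ht.inter_of_right Aᶜ) hmk_compl hinter_compl)
    exact ⟨k, hkt, hkA⟩

theorem stmt_8_general {s t : Set α} (ht : t.Finite) (σ τ : Equiv.Perm α) :
    τ ∈ DoubleCoset.doubleCoset σ (stabilizer (Equiv.Perm α) s) (stabilizer (Equiv.Perm α) t) ↔
      {j | j ∈ t ∧ σ j ∈ s}.ncard = {j | j ∈ t ∧ τ j ∈ s}.ncard := by
  have setOf_eq (ρ : Equiv.Perm α) : {j | j ∈ t ∧ ρ j ∈ s} = ρ⁻¹ • s ∩ t := by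
    ext j
    rw [Set.mem_inter_iff, Set.mem_inv_smul_set_iff, and_comm]
    rfl
  rw [mem_doubleCoset_stabilizer_iff, setOf_eq, setOf_eq, eq_comm]
  apply exists_mem_stabilizer_smul_eq_iff ht
  · simp only [mk_smul_set]
  · simp only [← Set.smul_set_compl, mk_smul_set]

end DoubleCosets

/-- Two permutations of `{1, …, n+1}` (modelled as `Fin (n+1)`, with `{1,…,i}`
corresponding to `{j : (j : ℕ) < i}`) lie in the same `(W_P, W_Q)` double coset, where
`W_P` stabilizes `{1,…,i}` and `W_Q` stabilizes `{1,…,m}`, if and only if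
`#{j ∈ {1,…,m} : σ(j) ≤ i}` agree. -/
theorem stmt_8 (n i m : ℕ) (hn : 1 ≤ n) (hi1 : 1 ≤ i) (hin : i ≤ n) (hm1 : 1 ≤ m)
    (hmn : m ≤ n) (σ τ : Equiv.Perm (Fin (n + 1))) :
    (∃ h k : Equiv.Perm (Fin (n + 1)),
        (⇑h '' {j : Fin (n + 1) | (j : ℕ) < i} = {j : Fin (n + 1) | (j : ℕ) < i}) ∧
        (⇑k '' {j : Fin (n + 1) | (j : ℕ) < m} = {j : Fin (n + 1) | (j : ℕ) < m}) ∧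
        τ = h * σ * k) ↔
      Set.ncard {j : Fin (n + 1) | (j : ℕ) < m ∧ ((σ j : Fin (n + 1)) : ℕ) < i}
        = Set.ncard {j : Fin (n + 1) | (j : ℕ) < m ∧ ((τ j : Fin (n + 1)) : ℕ) < i} := by
  have h := stmt_8_general (s := {j | j.val < i}) (t := {j | j.val < m}) (Set.toFinite _) σ τ
  simpa only [DoubleCoset.mem_doubleCoset, exists_and_left] using! h
end

section
/- Let Φ be a reduced crystallographic root system with base Δ = {α_1, …, α_n}, Weyl group W, and fix 1 ≤ m ≤ n. Let Φ_Q = Φ ∩ span{α_j : j ≠ m}, Φ_Q⁺ = Φ_Q ∩ Φ⁺, and for w ∈ W set ℓ_Q(w) = #{α ∈ Φ⁺ \ Φ_Q⁺ : w(α) ∈ Φ⁻}. If α₀ ∈ Φ⁺ and w ∈ W satisfy ℓ_Q(s_{α₀} w) = ℓ_Q(w) + 1, then there exists β₀ ∈ Φ⁺ \ Φ_Q⁺ with w(β₀) = α₀. -/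
open Module

/-- The set `Φ⁺` of positive roots: roots that are nonnegative integral combinations
of the simple roots `α_1, …, α_n`. -/
def rsPos {V : Type*} [AddCommGroup V] [Module ℝ V] {n : ℕ}
    (Φ : Set V) (α : Fin n → V) : Set V :=
  {β | β ∈ Φ ∧ ∃ c : Fin n → ℤ, (∀ p, 0 ≤ c p) ∧ β = ∑ p, (c p : ℝ) • α p}

/-- The set `Φ_Q⁺ = Φ_Q ∩ Φ⁺`, where `Φ_Q = Φ ∩ span{α_j : j ≠ m}`. -/
def rsQPos {V : Type*} [AddCommGroup V] [Module ℝ V] {n : ℕ}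
    (Φ : Set V) (α : Fin n → V) (m : Fin n) : Set V :=
  {β | β ∈ rsPos Φ α ∧ β ∈ Submodule.span ℝ (α '' {j | j ≠ m})}

/-- `ℓ_Q(w) = #{α ∈ Φ⁺ \ Φ_Q⁺ : w(α) ∈ Φ⁻}`. -/
noncomputable def rsLenQ {V : Type*} [AddCommGroup V] [Module ℝ V] {n : ℕ}
    (Φ : Set V) (α : Fin n → V) (m : Fin n) (u : V ≃ₗ[ℝ] V) : ℕ :=
  Set.ncard {β | β ∈ rsPos Φ α ∧ β ∉ rsQPos Φ α m ∧ -(u β) ∈ rsPos Φ α}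

/-!
The set `Φ⁺ \ Φ_Q⁺` is cut out of `Φ` by `0 < f`, where `f` is the `α_m`-coordinate. Put
`γ = w⁻¹ α₀`, so that `s_{α₀} w = w s_γ`, and suppose `γ ∉ Φ⁺ \ Φ_Q⁺`, that is, `f γ ≤ 0`. The
involution `s_γ` preserves the set of roots `β` with `f β > 0` and `f (s_γ β) > 0`, so on that set
`w` and `w s_γ` send equally many roots to `Φ⁻`. If instead `f β > 0 ≥ f (s_γ β)`, then `s_γ β` is
`β` plus a nonnegative multiple of `γ`, hence `w β` is `w (s_γ β)` minus a nonnegative multiple of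
`α₀`, and `w s_γ β ∈ Φ⁻` forces `w β ∈ Φ⁻`. Therefore `ℓ_Q(s_{α₀} w) ≤ ℓ_Q(w)`.
-/

open scoped Pointwise

theorem encard_inter_preimage_le_of_involutive {X : Type*} {σ : X → X} {A N : Set X}
    (hσ : σ.Involutive) (hN : (A ∩ σ ⁻¹' N) \ σ ⁻¹' A ⊆ N) :
    (A ∩ σ ⁻¹' N).encard ≤ (A ∩ N).encard := by
  have preimage_inter : σ ⁻¹' (A ∩ N ∩ σ ⁻¹' A) = A ∩ σ ⁻¹' N ∩ σ ⁻¹' A := by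
    ext x
    simp only [Set.mem_preimage, Set.mem_inter_iff, hσ x]
    tauto
  calc (A ∩ σ ⁻¹' N).encard
      = ((A ∩ σ ⁻¹' N) \ σ ⁻¹' A).encard + (A ∩ σ ⁻¹' N ∩ σ ⁻¹' A).encard :=
        (Set.encard_sdiff_add_encard_inter _ _).symm
    _ ≤ ((A ∩ N) \ σ ⁻¹' A).encard + (A ∩ N ∩ σ ⁻¹' A).encard := by
        rw [← preimage_inter, Set.encard_preimage_of_bijective hσ.bijective]
        gcongr ?_ + _
        exact Set.encard_le_encard fun x hx ↦ ⟨⟨hx.1.1, hN hx⟩, hx.2⟩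
    _ = (A ∩ N).encard := Set.encard_sdiff_add_encard_inter _ _

theorem closure_le_stabilizer_of_smul_mem {G X : Type*} [Group G] [MulAction G X] {S : Set G}
    {Φ : Set X} (hfin : Φ.Finite) (hS : ∀ g ∈ S, ∀ x ∈ Φ, g • x ∈ Φ) :
    Subgroup.closure S ≤ MulAction.stabilizer G Φ :=
  (Subgroup.closure_le _).2 fun g hg ↦ (MulAction.mem_stabilizer_set' hfin).2 (hS g hg)

theorem reflection_mul_eq_mul_reflection {R M : Type*} [CommRing R] [AddCommGroup M] [Module R M]
    {φ : Dual R M} {γ : M} (w : M ≃ₗ[R] M) (hφ : φ (w γ) = 2) :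
    reflection hφ * w = w * reflection (f := φ ∘ₗ w.toLinearMap) hφ := by
  ext x
  simp [reflection_apply]

theorem encard_inter_preimage_reflection_le {R M : Type*} [CommRing R] [LinearOrder R]
    [IsStrictOrderedRing R] [AddCommGroup M] [Module R M] {Φ : Set M} {C : PointedCone R M}
    {f φ : Dual R M} {γ : M} (hφ : φ γ = 2) (hΦ : Set.MapsTo (reflection hφ) Φ Φ)
    (hγC : γ ∈ C) (hfγ : f γ ≤ 0) :
    (Φ ∩ {β | 0 < f β} ∩ reflection hφ ⁻¹' (-(Φ ∩ C))).encard ≤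
      (Φ ∩ {β | 0 < f β} ∩ -(Φ ∩ C)).encard := by
  refine encard_inter_preimage_le_of_involutive (involutive_reflection hφ) ?_
  rintro β ⟨⟨⟨hβ, hfβ⟩, hrβΦ, hrβC⟩, hrβ⟩
  have hf_reflection : f β - φ β * f γ ≤ 0 := by
    have : f (reflection hφ β) ≤ 0 := not_lt.1 fun h ↦ hrβ ⟨hΦ hβ, h⟩
    simpa [reflection_apply] using this
  have hφβ : φ β ≤ 0 := by
    by_contra! hφβ
    have : φ β * f γ ≤ 0 := mul_nonpos_of_nonneg_of_nonpos hφβ.le hfγ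
    exact hfβ.not_ge (by linarith)
  refine ⟨by simpa [involutive_reflection hφ β] using hΦ hrβΦ, ?_⟩
  have neg_eq : -β = -reflection hφ β + (-φ β) • γ := by
    rw [reflection_apply]
    module
  rw [neg_eq]
  exact C.add_mem hrβC (C.smul_mem (neg_nonneg.2 hφβ) hγC)

section LinearIndependent

variable {ι : Type*} [Fintype ι]

theorem exists_dual_apply_sum_smul_eq {K V : Type*} [Field K] [AddCommGroup V] [Module K V]
    {v : ι → V} (hv : LinearIndependent K v) (i : ι) :
    ∃ f : Dual K V, ∀ c : ι → K, f (∑ j, c j • v j) = c i := by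
  obtain ⟨g, hg⟩ := (Fintype.linearCombination K v).exists_leftInverse_of_injective
    (LinearMap.ker_eq_bot.2 hv.fintypeLinearCombination_injective)
  exact ⟨LinearMap.proj i ∘ₗ g, fun c ↦ congrFun (LinearMap.congr_fun hg c) i⟩

theorem sum_smul_mem_span_image_iff {R M : Type*} [Ring R] [AddCommGroup M] [Module R M]
    {v : ι → M} (hv : LinearIndependent R v) (c : ι → R) (s : Set ι) :
    ∑ j, c j • v j ∈ Submodule.span R (v '' s) ↔ ∀ i ∉ s, c i = 0 := by
  refine ⟨fun h i hi ↦ ?_, fun h ↦ sum_mem fun j _ ↦ ?_⟩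
  · obtain ⟨l, hl, hlc⟩ := (Finsupp.mem_span_image_iff_linearCombination R).1 h
    rw [Finsupp.linearCombination_apply, l.sum_fintype _ (by simp)] at hlc
    rw [← hv.eq_coords_of_eq hlc i, (Finsupp.mem_supported' R l).1 hl i hi]
  · by_cases hj : j ∈ s
    · exact Submodule.smul_mem _ _ (Submodule.subset_span ⟨j, hj, rfl⟩)
    · simp [h j hj]

end LinearIndependent

section RootSystem

variable {V : Type*} [AddCommGroup V] [Module ℝ V] {n : ℕ} {Φ : Set V} {α : Fin n → V}

theorem rsPos_eq_inter_hull (hind : LinearIndependent ℝ α)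
    (hint : ∀ β ∈ Φ, ∃ c : Fin n → ℤ, β = ∑ p, (c p : ℝ) • α p) :
    rsPos Φ α = Φ ∩ PointedCone.hull ℝ (Set.range α) := by
  ext β
  refine and_congr_right fun hβ ↦ ⟨?_, fun hβC ↦ ?_⟩
  · rintro ⟨c, hc, rfl⟩
    exact sum_mem fun p _ ↦ PointedCone.smul_mem _ (Int.cast_nonneg (hc p))
      (PointedCone.subset_hull ⟨p, rfl⟩)
  · obtain ⟨c, rfl⟩ := hint β hβ
    obtain ⟨a, ha⟩ := (Submodule.mem_span_range_iff_exists_fun _).1 hβC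
    have coord_eq := hind.eq_coords_of_eq (f := fun p ↦ (a p : ℝ)) (g := fun p ↦ (c p : ℝ)) ha
    refine ⟨c, fun p ↦ ?_, rfl⟩
    have : (0 : ℝ) ≤ c p := coord_eq p ▸ (a p).2
    exact_mod_cast this

theorem rsLenQ_eq_ncard (m : Fin n) (u : V ≃ₗ[ℝ] V) :
    rsLenQ Φ α m u = ((rsPos Φ α \ rsQPos Φ α m) ∩ u ⁻¹' (-rsPos Φ α)).ncard :=
  congrArg Set.ncard (Set.ext fun _ ↦ and_assoc.symm)

section SignedCoordinates

variable (hind : LinearIndependent ℝ α)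
  (hbase : ∀ β ∈ Φ,
    (∃ c : Fin n → ℤ, (∀ p, 0 ≤ c p) ∧ β = ∑ p, (c p : ℝ) • α p) ∨
    (∃ c : Fin n → ℤ, (∀ p, c p ≤ 0) ∧ β = ∑ p, (c p : ℝ) • α p))
include hind hbase

theorem exists_dual_rsPos_sdiff_rsQPos_eq (m : Fin n) :
    ∃ f : Dual ℝ V, rsPos Φ α \ rsQPos Φ α m = Φ ∩ {β | 0 < f β} := by
  obtain ⟨f, hf⟩ := exists_dual_apply_sum_smul_eq hind m
  have mem_span_iff (c : Fin n → ℤ) :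
      ∑ p, (c p : ℝ) • α p ∈ Submodule.span ℝ (α '' {j | j ≠ m}) ↔ c m = 0 := by
    simp [sum_smul_mem_span_image_iff hind]
  refine ⟨f, Set.ext fun β ↦ ⟨?_, ?_⟩⟩
  · rintro ⟨⟨hβ, c, hc, rfl⟩, hβQ⟩
    have hcm : c m ≠ 0 := fun h ↦ hβQ ⟨⟨hβ, c, hc, rfl⟩, (mem_span_iff c).2 h⟩
    refine ⟨hβ, ?_⟩
    simpa [hf] using (hc m).lt_of_ne' hcm
  · rintro ⟨hβ, hfβ⟩
    obtain ⟨c, hc, rfl⟩ | ⟨c, hc, rfl⟩ := hbase β hβ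
    all_goals have hcm : 0 < c m := by simpa [hf] using hfβ
    · exact ⟨⟨hβ, c, hc, rfl⟩, fun hβQ ↦ hcm.ne' ((mem_span_iff c).1 hβQ.2)⟩
    · exact absurd (hc m) hcm.not_ge

theorem rsLenQ_mul_reflection_le (hfin : Φ.Finite) {m : Fin n} {w : V ≃ₗ[ℝ] V} {γ : V}
    {φ : Dual ℝ V} (hφ : φ γ = 2) (hw : w ∈ MulAction.stabilizer (V ≃ₗ[ℝ] V) Φ)
    (hφΦ : Set.MapsTo (reflection hφ) Φ Φ) (hwγ : w γ ∈ rsPos Φ α)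
    (hγ : γ ∉ rsPos Φ α \ rsQPos Φ α m) :
    rsLenQ Φ α m (w * reflection hφ) ≤ rsLenQ Φ α m w := by
  obtain ⟨f, hf⟩ := exists_dual_rsPos_sdiff_rsQPos_eq hind hbase m
  have preimage_rsPos :
      w ⁻¹' rsPos Φ α = Φ ∩ (PointedCone.hull ℝ (Set.range α)).comap w.toLinearMap := by
    rw [rsPos_eq_inter_hull hind fun β hβ ↦ (hbase β hβ).elim
      (fun ⟨c, _, hc⟩ ↦ ⟨c, hc⟩) (fun ⟨c, _, hc⟩ ↦ ⟨c, hc⟩)]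
    exact Set.ext fun β ↦ and_congr_left' (MulAction.mem_stabilizer_set.1 hw β)
  have preimage_neg_rsPos : w ⁻¹' (-rsPos Φ α) = -(w ⁻¹' rsPos Φ α) := by
    ext β
    simp
  obtain ⟨hγΦ, hγC⟩ : γ ∈ Φ ∩ (PointedCone.hull ℝ (Set.range α)).comap w.toLinearMap :=
    preimage_rsPos ▸ hwγ
  have hfγ : f γ ≤ 0 := not_lt.1 fun h ↦ hγ (hf ▸ ⟨hγΦ, h⟩)
  have encard_le := encard_inter_preimage_reflection_le hφ hφΦ hγC hfγ
  rw [← preimage_rsPos, ← hf, ← preimage_neg_rsPos, ← Set.preimage_comp] at encard_le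
  rw [rsLenQ_eq_ncard, rsLenQ_eq_ncard]
  refine ENat.toNat_le_toNat encard_le (Set.encard_ne_top_iff.2 (hfin.subset ?_))
  exact fun β hβ ↦ hβ.1.1.1

theorem stmt_15_general (hfin : Φ.Finite) {m : Fin n} {α₀ : V} (hα₀ : α₀ ∈ rsPos Φ α)
    {φ : Dual ℝ V} (hφ : φ α₀ = 2)
    (hφΦ : reflection hφ ∈ MulAction.stabilizer (V ≃ₗ[ℝ] V) Φ)
    {w : V ≃ₗ[ℝ] V} (hw : w ∈ MulAction.stabilizer (V ≃ₗ[ℝ] V) Φ)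
    (hlen : rsLenQ Φ α m w < rsLenQ Φ α m (reflection hφ * w)) :
    ∃ β₀ : V, β₀ ∈ rsPos Φ α ∧ β₀ ∉ rsQPos Φ α m ∧ w β₀ = α₀ := by
  obtain ⟨γ, rfl⟩ := w.surjective α₀
  by_contra! hγ
  rw [reflection_mul_eq_mul_reflection] at hlen
  refine hlen.not_ge (rsLenQ_mul_reflection_le hind hbase hfin _ hw ?_ hα₀
    fun h ↦ hγ γ h.1 h.2 rfl)
  have conj_mem := mul_mem (inv_mem hw) (mul_mem hφΦ hw)
  rw [reflection_mul_eq_mul_reflection, inv_mul_cancel_left] at conj_mem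
  exact fun β ↦ (MulAction.mem_stabilizer_set.1 conj_mem β).2

end SignedCoordinates

end RootSystem

/-- For a reduced crystallographic root system `Φ` with base `α_1, …, α_n` and Weyl
group `W`: if `α₀ ∈ Φ⁺` and `w ∈ W` satisfy `ℓ_Q(s_{α₀} w) = ℓ_Q(w) + 1`, then there
is `β₀ ∈ Φ⁺ \ Φ_Q⁺` with `w(β₀) = α₀`. -/
theorem stmt_15 {V : Type*} [AddCommGroup V] [Module ℝ V] (n : ℕ)
    (Φ : Set V) (hfin : Φ.Finite) (hspan : Submodule.span ℝ Φ = ⊤)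
    (hreduced : ∀ β ∈ Φ, ∀ c : ℝ, c • β ∈ Φ → c = 1 ∨ c = -1)
    (cor : V → Module.Dual ℝ V)
    (hcor2 : ∀ β ∈ Φ, cor β β = 2)
    (hcrys : ∀ β ∈ Φ, ∀ γ ∈ Φ, ∃ k : ℤ, cor γ β = (k : ℝ))
    (s : V → (V ≃ₗ[ℝ] V))
    (hs : ∀ β ∈ Φ, ∀ x : V, s β x = x - cor β x • β)
    (hsΦ : ∀ β ∈ Φ, ∀ γ ∈ Φ, s β γ ∈ Φ)
    (α : Fin n → V) (hα : ∀ p, α p ∈ Φ) (hind : LinearIndependent ℝ α)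
    (hbase : ∀ β ∈ Φ,
      (∃ c : Fin n → ℤ, (∀ p, 0 ≤ c p) ∧ β = ∑ p, (c p : ℝ) • α p) ∨
      (∃ c : Fin n → ℤ, (∀ p, c p ≤ 0) ∧ β = ∑ p, (c p : ℝ) • α p))
    (m : Fin n)
    (α₀ : V) (hα₀ : α₀ ∈ rsPos Φ α)
    (w : V ≃ₗ[ℝ] V) (hw : w ∈ Subgroup.closure {x : V ≃ₗ[ℝ] V | ∃ β ∈ Φ, x = s β})
    (hlen : rsLenQ Φ α m (s α₀ * w) = rsLenQ Φ α m w + 1) :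
    ∃ β₀ : V, β₀ ∈ rsPos Φ α ∧ β₀ ∉ rsQPos Φ α m ∧ w β₀ = α₀ := by
  have s_eq : s α₀ = reflection (hcor2 α₀ hα₀.1) := LinearEquiv.ext (hs α₀ hα₀.1)
  have W_le := closure_le_stabilizer_of_smul_mem
    (S := {x : V ≃ₗ[ℝ] V | ∃ β ∈ Φ, x = s β}) hfin (by rintro _ ⟨β, hβ, rfl⟩; exact hsΦ β hβ)
  exact stmt_15_general hind hbase hfin hα₀ (hcor2 α₀ hα₀.1)
    (s_eq ▸ W_le (Subgroup.subset_closure ⟨α₀, hα₀.1, rfl⟩)) (W_le hw) (by rw [← s_eq]; lia)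
end
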